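/- arXiv:2309.05816 — 2 statements merged into one kernel-verified Lean document; each statement's English description precedes it below -/
import Mathlib

section
/- Let T : M → M be any mapping. Then T commutes with the utility transform T^u for every increasing left-continuous u : ℝ → ℝ if and only if there exists a right-continuous distortion function d ∈ F_D^R such that T = T_d. -/
/-!
An increasing left-continuous `u` has closed lower sets `{y | u y ≤ x}` as sublevel sets, so
`T^u F x` is `0`, `1` or a value `F s`. A right-continuous distortion acts by `T_d F = d ∘ F`; as
`d` fixes `0` and `1`, it commutes with every `T^u`.

Conversely, let `U` be the uniform cdf on `[0, 1]` and `G = T U`. By inverse transform sampling,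
every `F` in `M` is `T^q U` for a left quantile function `q` of `F`, continued to `ℝ` by a value `a`
with `F a = 0` on `(-∞, 0]`, and commutation gives `T F = T^q G`. If `a ≤ x` and `F x < 1`, then
`q p ≤ x` means `p ≤ F x`, so `T F x = G (F x)`; thus `T F = d ∘ F`, where `d` agrees with `G` on
`[0, 1)` and `d 1 = 1`, provided that `G 0 = 0`. To see the latter, take `F = U`: every `a ≤ 0` is
allowed, and `G = T^q G` evaluated at `a` gives `G a = G 0`.
-/

open MeasureTheory Filter Topology Set

noncomputable section

/-- The set of cdfs of compactly supported probability distributions on ℝ: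
increasing, right-continuous, equal to `0` for all sufficiently small `x` and
equal to `1` for all sufficiently large `x`. -/
def mSet : Set (ℝ → ℝ) :=
  {F | Monotone F ∧ (∀ x, ContinuousWithinAt F (Set.Ici x) x) ∧
    (∃ a, ∀ x ≤ a, F x = 0) ∧ (∃ b, ∀ x, b ≤ x → F x = 1)}

/-- The set of cdfs of all probability distributions on ℝ: increasing,
right-continuous, with limit `0` at `-∞` and limit `1` at `+∞`. -/
def m0Set : Set (ℝ → ℝ) :=
  {F | Monotone F ∧ (∀ x, ContinuousWithinAt F (Set.Ici x) x) ∧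
    Tendsto F atBot (𝓝 0) ∧ Tendsto F atTop (𝓝 1)}

/-- A utility function: increasing (non-strict) and continuous. -/
def IsUF (u : ℝ → ℝ) : Prop := Monotone u ∧ Continuous u

/-- An increasing and left-continuous function on ℝ. -/
def IsLeftCtsIncr (u : ℝ → ℝ) : Prop :=
  Monotone u ∧ ∀ x, ContinuousWithinAt u (Set.Iic x) x

/-- A distortion function: an increasing function `d : [0,1] → [0,1]` with
`d 0 = 0` and `d 1 = 1` (values outside `[0,1]` are irrelevant). -/
def IsDF (d : ℝ → ℝ) : Prop :=
  MonotoneOn d (Set.Icc 0 1) ∧ d 0 = 0 ∧ d 1 = 1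

/-- Right-continuity of a distortion function on `[0,1)`. -/
def DFRightCts (d : ℝ → ℝ) : Prop :=
  ∀ x ∈ Set.Ico (0:ℝ) 1, ContinuousWithinAt d (Set.Ioi x) x

/-- A distortion function with moreover `d(0+) = 0` and `d(1-) = 1`. -/
def IsDFhat (d : ℝ → ℝ) : Prop :=
  IsDF d ∧ Tendsto d (𝓝[>] (0:ℝ)) (𝓝 0) ∧ Tendsto d (𝓝[<] (1:ℝ)) (𝓝 1)

/-- The probability distortion generated by `d`:  `T_d F x = (d ∘ F)(x+)`,
the right limit of `d ∘ F` at `x`. -/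
noncomputable def distortT (d F : ℝ → ℝ) : ℝ → ℝ :=
  fun x => Function.rightLim (d ∘ F) x

/-- The utility transform `T^u`: it maps a cdf `F` to the cdf of the
pushforward under `u` of the probability measure with cdf `F`. -/
noncomputable def utilityT (u F : ℝ → ℝ) : ℝ → ℝ := by
  classical
  exact
    if h : Monotone F ∧ ∀ x, ContinuousWithinAt F (Set.Ici x) x then
      fun x => ((StieltjesFunction.measure ⟨F, h.1, h.2⟩).map u (Set.Iic x)).toReal
    else F

/-- Left quantile `F_L^{-1}(p) = inf {x | F x ≥ p}`. -/
noncomputable def leftQ (F : ℝ → ℝ) (p : ℝ) : ℝ := sInf {x | p ≤ F x}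

/-- Right quantile `F_R^{-1}(p) = inf {x | F x > p}`. -/
noncomputable def rightQ (F : ℝ → ℝ) (p : ℝ) : ℝ := sInf {x | p < F x}

section Order

variable {α β : Type*} [TopologicalSpace α]

lemma eq_empty_or_univ_or_Iic_of_isClosed_of_isLowerSet [ConditionallyCompleteLinearOrder α]
    [OrderTopology α] {S : Set α} (hS : IsClosed S) (hlower : IsLowerSet S) :
    S = ∅ ∨ S = univ ∨ ∃ s, S = Iic s := by
  rcases S.eq_empty_or_nonempty with hempty | hne
  · exact Or.inl hempty
  by_cases hbdd : BddAbove S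
  · have hsup : sSup S ∈ S := hS.csSup_mem hne hbdd
    exact Or.inr (Or.inr ⟨sSup S, Subset.antisymm (fun _ hy => le_csSup hbdd hy)
      fun _ hy => hlower hy hsup⟩)
  · refine Or.inr (Or.inl (eq_univ_of_forall fun x => ?_))
    obtain ⟨y, hy, hxy⟩ := not_bddAbove_iff.1 hbdd x
    exact hlower hxy.le hy

variable [LinearOrder α] [TopologicalSpace β] [LinearOrder β] [OrderTopology β] {f : α → β}

lemma lowerSemicontinuous_iff_continuousWithinAt_Iic (hf : Monotone f) :
    LowerSemicontinuous f ↔ ∀ x, ContinuousWithinAt f (Iic x) x := by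
  refine ⟨fun h x => tendsto_order.2 ⟨fun c hc => ?_, fun c hc => ?_⟩, fun h x c hc => ?_⟩
  · exact (h x c hc).filter_mono nhdsWithin_le_nhds
  · filter_upwards [self_mem_nhdsWithin] with y hy using (hf hy).trans_lt hc
  · rw [← nhdsLE_sup_nhdsGE, eventually_sup]
    refine ⟨(h x).eventually_const_lt hc, ?_⟩
    filter_upwards [self_mem_nhdsWithin] with y hy using hc.trans_le (hf hy)

lemma upperSemicontinuous_iff_continuousWithinAt_Ici (hf : Monotone f) :
    UpperSemicontinuous f ↔ ∀ x, ContinuousWithinAt f (Ici x) x :=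
  lowerSemicontinuous_iff_continuousWithinAt_Iic (α := αᵒᵈ) (β := βᵒᵈ) hf.dual

end Order

variable {F G d u : ℝ → ℝ} {a p x : ℝ}

lemma isLeftCtsIncr_iff_isClosed :
    IsLeftCtsIncr u ↔ Monotone u ∧ ∀ x, IsClosed {y | u y ≤ x} :=
  and_congr_right fun hu => (lowerSemicontinuous_iff_continuousWithinAt_Iic hu).symm.trans
    lowerSemicontinuous_iff_isClosed_preimage

lemma IsLeftCtsIncr.sublevel_eq_empty_or_univ_or_Iic (hu : IsLeftCtsIncr u) (x : ℝ) :
    {y | u y ≤ x} = ∅ ∨ {y | u y ≤ x} = univ ∨ ∃ s, {y | u y ≤ x} = Iic s :=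
  eq_empty_or_univ_or_Iic_of_isClosed_of_isLowerSet ((isLeftCtsIncr_iff_isClosed.1 hu).2 x)
    fun _ _ hzy hy => (hu.1 hzy).trans hy

lemma tendsto_atBot_of_mem_mSet (hF : F ∈ mSet) : Tendsto F atBot (𝓝 0) := by
  obtain ⟨a, ha⟩ := hF.2.2.1
  exact tendsto_const_nhds.congr' ((eventually_le_atBot a).mono fun x hx => (ha x hx).symm)

lemma tendsto_atTop_of_mem_mSet (hF : F ∈ mSet) : Tendsto F atTop (𝓝 1) := by
  obtain ⟨b, hb⟩ := hF.2.2.2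
  exact tendsto_const_nhds.congr' ((eventually_ge_atTop b).mono fun x hx => (hb x hx).symm)

lemma mem_Icc_of_mem_mSet (hF : F ∈ mSet) (x : ℝ) : F x ∈ Icc (0 : ℝ) 1 :=
  ⟨hF.1.le_of_tendsto (tendsto_atBot_of_mem_mSet hF) x,
    hF.1.ge_of_tendsto (tendsto_atTop_of_mem_mSet hF) x⟩

lemma isClosed_superlevel_of_mem_mSet (hF : F ∈ mSet) (p : ℝ) : IsClosed {x | p ≤ F x} :=
  ((upperSemicontinuous_iff_continuousWithinAt_Ici hF.1).2 hF.2.1).isClosed_preimage p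

/-- The probability measure on `ℝ` with cdf `F`. -/
def cdfMeasure (hF : F ∈ mSet) : Measure ℝ :=
  StieltjesFunction.measure ⟨F, hF.1, hF.2.1⟩

instance isProbabilityMeasure_cdfMeasure (hF : F ∈ mSet) : IsProbabilityMeasure (cdfMeasure hF) :=
  StieltjesFunction.isProbabilityMeasure _ (tendsto_atBot_of_mem_mSet hF)
    (tendsto_atTop_of_mem_mSet hF)

lemma cdfMeasure_real_Iic (hF : F ∈ mSet) (x : ℝ) : (cdfMeasure hF).real (Iic x) = F x := by
  rw [← ProbabilityTheory.cdf_eq_real, cdfMeasure, ProbabilityTheory.cdf_measure_stieltjesFunction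
    _ (tendsto_atBot_of_mem_mSet hF) (tendsto_atTop_of_mem_mSet hF)]

lemma utilityT_apply (hu : Measurable u) (hF : F ∈ mSet) (x : ℝ) :
    utilityT u F x = (cdfMeasure hF).real {y | u y ≤ x} := by
  have hF' : Monotone F ∧ ∀ x, ContinuousWithinAt F (Ici x) x := ⟨hF.1, hF.2.1⟩
  rw [utilityT, dif_pos hF']
  exact map_measureReal_apply hu measurableSet_Iic

lemma utilityT_eq_cdf (hu : Measurable u) (hF : F ∈ mSet) :
    utilityT u F = ProbabilityTheory.cdf ((cdfMeasure hF).map u) := by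
  have := Measure.isProbabilityMeasure_map (μ := cdfMeasure hF) hu.aemeasurable
  funext x
  rw [utilityT_apply hu hF, ProbabilityTheory.cdf_eq_real,
    map_measureReal_apply hu measurableSet_Iic]
  rfl

lemma le_utilityT_apply (hu : Monotone u) (hF : F ∈ mSet) (hx : u a ≤ x) :
    F a ≤ utilityT u F x := by
  rw [utilityT_apply hu.measurable hF, ← cdfMeasure_real_Iic hF]
  exact measureReal_mono fun y hy => (hu hy).trans hx

lemma utilityT_apply_le (hu : Monotone u) (hF : F ∈ mSet) (hx : x < u a) :
    utilityT u F x ≤ F a := by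
  rw [utilityT_apply hu.measurable hF, ← cdfMeasure_real_Iic hF]
  exact measureReal_mono fun y hy => (hu.reflect_lt (lt_of_le_of_lt hy hx)).le

lemma utilityT_mem_mSet (hu : Monotone u) (hF : F ∈ mSet) : utilityT u F ∈ mSet := by
  obtain ⟨a, ha⟩ := hF.2.2.1
  obtain ⟨b, hb⟩ := hF.2.2.2
  have hcdf := utilityT_eq_cdf hu.measurable hF
  refine ⟨?_, ?_, ⟨u a - 1, fun x hx => ?_⟩, ⟨u b, fun x hx => ?_⟩⟩
  · exact hcdf ▸ ProbabilityTheory.monotone_cdf _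
  · exact hcdf ▸ (ProbabilityTheory.cdf _).right_continuous
  · have hle : utilityT u F x ≤ F a := utilityT_apply_le hu hF (hx.trans_lt (sub_one_lt _))
    exact le_antisymm (hle.trans_eq (ha a le_rfl))
      (hcdf ▸ ProbabilityTheory.cdf_nonneg _ x)
  · have hle : F b ≤ utilityT u F x := le_utilityT_apply hu hF hx
    exact le_antisymm (hcdf ▸ ProbabilityTheory.cdf_le_one _ x) ((hb b le_rfl).symm.trans_le hle)

lemma DFRightCts.continuousWithinAt_Icc (hr : DFRightCts d) (hp : p ∈ Icc (0 : ℝ) 1) :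
    ContinuousWithinAt d (Icc p 1) p := by
  rcases hp.2.eq_or_lt with rfl | hlt
  · simp only [Icc_self, continuousWithinAt_singleton]
  · exact (continuousWithinAt_Ioi_iff_Ici.1 (hr p ⟨hp.1, hlt⟩)).mono Icc_subset_Ici_self

lemma comp_mem_mSet (hd : IsDF d) (hr : DFRightCts d) (hF : F ∈ mSet) : d ∘ F ∈ mSet := by
  have hmem := mem_Icc_of_mem_mSet hF
  obtain ⟨a, ha⟩ := hF.2.2.1
  obtain ⟨b, hb⟩ := hF.2.2.2
  refine ⟨fun x y hxy => hd.1 (hmem x) (hmem y) (hF.1 hxy), fun x => ?_,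
    ⟨a, fun x hx => ?_⟩, ⟨b, fun x hx => ?_⟩⟩
  · exact (hr.continuousWithinAt_Icc (hmem x)).comp (hF.2.1 x)
      fun y hy => ⟨hF.1 hy, (hmem y).2⟩
  · rw [Function.comp_apply, ha x hx, hd.2.1]
  · rw [Function.comp_apply, hb x hx, hd.2.2]

lemma distortT_eq_comp (hd : IsDF d) (hr : DFRightCts d) (hF : F ∈ mSet) :
    distortT d F = d ∘ F := by
  have hdF := comp_mem_mSet hd hr hF
  exact funext fun x => hdF.1.continuousWithinAt_Ioi_iff_rightLim_eq.1
    ((hdF.2.1 x).mono Ioi_subset_Ici_self)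

lemma utilityT_comp (hu : IsLeftCtsIncr u) (hd : IsDF d) (hF : F ∈ mSet) (hdF : d ∘ F ∈ mSet) :
    utilityT u (d ∘ F) = d ∘ utilityT u F := by
  funext x
  rw [Function.comp_apply, utilityT_apply hu.1.measurable hF, utilityT_apply hu.1.measurable hdF]
  rcases hu.sublevel_eq_empty_or_univ_or_Iic x with h | h | ⟨s, h⟩
  · simp only [h, measureReal_empty, hd.2.1]
  · simp only [h, probReal_univ, hd.2.2]
  · simp only [h, cdfMeasure_real_Iic, Function.comp_apply]

theorem distortT_utilityT_comm (hu : IsLeftCtsIncr u) (hd : IsDF d) (hr : DFRightCts d)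
    (hF : F ∈ mSet) : distortT d (utilityT u F) = utilityT u (distortT d F) := by
  rw [distortT_eq_comp hd hr (utilityT_mem_mSet hu.1 hF), distortT_eq_comp hd hr hF,
    utilityT_comp hu hd hF (comp_mem_mSet hd hr hF)]

/-- The left quantile function of `F`, continued to `ℝ` by the value `a` on `(-∞, 0]` and by its
value at `1` on `[1, ∞)`; meant for `F` in `M` and `a` with `F a = 0`. Unlike in `leftQ`, the
infimum is over a nonempty set bounded below for every `p`, so it never takes a junk value. -/
def quantile (a : ℝ) (F : ℝ → ℝ) (p : ℝ) : ℝ := sInf {x | a ≤ x ∧ min p 1 ≤ F x}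

lemma quantile_le_iff (hF : F ∈ mSet) : quantile a F p ≤ x ↔ a ≤ x ∧ min p 1 ≤ F x := by
  obtain ⟨b, hb⟩ := hF.2.2.2
  have hne : {x | a ≤ x ∧ min p 1 ≤ F x}.Nonempty :=
    ⟨max a b, le_max_left a b, (min_le_right p 1).trans_eq (hb _ (le_max_right a b)).symm⟩
  have hbdd : BddBelow {x | a ≤ x ∧ min p 1 ≤ F x} := ⟨a, fun _ hy => hy.1⟩
  have hclosed : IsClosed {x | a ≤ x ∧ min p 1 ≤ F x} :=
    isClosed_Ici.inter (isClosed_superlevel_of_mem_mSet hF _)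
  obtain ⟨hqa, hqF⟩ := hclosed.csInf_mem hne hbdd
  exact ⟨fun h => ⟨hqa.trans h, hqF.trans (hF.1 h)⟩, fun h => csInf_le hbdd h⟩

lemma isLeftCtsIncr_quantile (hF : F ∈ mSet) (a : ℝ) : IsLeftCtsIncr (quantile a F) := by
  refine isLeftCtsIncr_iff_isClosed.2 ⟨fun p q hpq => ?_, fun x => ?_⟩
  · obtain ⟨hqa, hqF⟩ := (quantile_le_iff hF).1 (le_refl (quantile a F q))
    exact (quantile_le_iff hF).2 ⟨hqa, (min_le_min_right 1 hpq).trans hqF⟩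
  · simp only [quantile_le_iff hF]
    exact isClosed_const.and (isClosed_le (by fun_prop) continuous_const)

/-- The distortion function obtained from a cdf `G` with `G 0 = 0` by resetting the value at `1`,
where `G` itself may still be smaller than `1`. It is applied to `G = T U`, `U` the uniform cdf. -/
def distortionOf (G : ℝ → ℝ) (p : ℝ) : ℝ := if p < 1 then G p else 1

lemma isDF_distortionOf (hG : G ∈ mSet) (hG0 : G 0 = 0) : IsDF (distortionOf G) := by
  refine ⟨fun p _ q _ hpq => ?_, by simp [distortionOf, hG0], by simp [distortionOf]⟩
  unfold distortionOf
  split_ifs with hp hq hq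
  · exact hG.1 hpq
  · exact (mem_Icc_of_mem_mSet hG p).2
  · exact absurd (hpq.trans_lt hq) hp
  · exact le_rfl

lemma dfRightCts_distortionOf (hG : G ∈ mSet) : DFRightCts (distortionOf G) := fun p hp => by
  have heq : distortionOf G =ᶠ[𝓝 p] G := (eventually_lt_nhds hp.2).mono fun q hq => if_pos hq
  exact ((hG.2.1 p).mono Ioi_subset_Ici_self).congr_of_eventuallyEq
    (heq.filter_mono nhdsWithin_le_nhds) heq.self_of_nhds

lemma utilityT_quantile_apply (hF : F ∈ mSet) (hG : G ∈ mSet) (a x : ℝ) :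
    utilityT (quantile a F) G x = if a ≤ x then distortionOf G (F x) else 0 := by
  simp only [utilityT_apply (isLeftCtsIncr_quantile hF a).1.measurable hG, quantile_le_iff hF,
    distortionOf]
  split_ifs with hax hFx
  · have hset : {p | a ≤ x ∧ min p 1 ≤ F x} = Iic (F x) := by ext p; simp [hax, hFx]
    rw [hset, cdfMeasure_real_Iic]
  · have hset : {p | a ≤ x ∧ min p 1 ≤ F x} = univ := by ext p; simp [hax, not_lt.1 hFx]
    rw [hset, probReal_univ]
  · simp only [hax, false_and, ofPred_false, measureReal_empty]

lemma utilityT_quantile (hF : F ∈ mSet) (ha : F a = 0) (hG : G ∈ mSet) (hG0 : G 0 = 0) :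
    utilityT (quantile a F) G = distortionOf G ∘ F := by
  funext x
  rw [utilityT_quantile_apply hF hG, Function.comp_apply, ite_eq_left_iff]
  intro hx
  have hFx : F x = 0 :=
    le_antisymm ((hF.1 (not_le.1 hx).le).trans_eq ha) (mem_Icc_of_mem_mSet hF x).1
  rw [hFx, (isDF_distortionOf hG hG0).2.1]

/-- The cdf of the uniform distribution on `[0, 1]`. -/
def unifCdf (x : ℝ) : ℝ := max 0 (min x 1)

lemma unifCdf_of_nonpos (hx : x ≤ 0) : unifCdf x = 0 :=
  max_eq_left ((min_le_left x 1).trans hx)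

lemma unifCdf_of_one_le (hx : 1 ≤ x) : unifCdf x = 1 := by
  simp [unifCdf, hx]

lemma unifCdf_mem_mSet : unifCdf ∈ mSet := by
  have hcont : Continuous unifCdf := by unfold unifCdf; fun_prop
  exact ⟨fun _ _ h => max_le_max_left 0 (min_le_min_right 1 h), fun _ => hcont.continuousWithinAt,
    ⟨0, fun _ => unifCdf_of_nonpos⟩, ⟨1, fun _ => unifCdf_of_one_le⟩⟩

lemma distortionOf_unifCdf (hp : p ∈ Icc (0 : ℝ) 1) : distortionOf unifCdf p = p := by
  rcases hp.2.eq_or_lt with rfl | hlt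
  · simp [distortionOf]
  · simp [distortionOf, unifCdf, hlt, hp.1, hp.2]

lemma utilityT_quantile_unifCdf (hF : F ∈ mSet) (ha : F a = 0) :
    utilityT (quantile a F) unifCdf = F := by
  rw [utilityT_quantile hF ha unifCdf_mem_mSet (unifCdf_of_nonpos le_rfl)]
  exact funext fun x => distortionOf_unifCdf (mem_Icc_of_mem_mSet hF x)

lemma apply_zero_of_utilityT_quantile_unifCdf (hG : G ∈ mSet)
    (hfix : ∀ a ≤ 0, utilityT (quantile a unifCdf) G = G) : G 0 = 0 := by
  obtain ⟨b, hb⟩ := hG.2.2.1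
  have ha : min b 0 ≤ 0 := min_le_right b 0
  calc G 0 = utilityT (quantile (min b 0) unifCdf) G (min b 0) := by
        simp [utilityT_quantile_apply unifCdf_mem_mSet hG, unifCdf_of_nonpos ha, distortionOf]
    _ = G (min b 0) := by rw [hfix _ ha]
    _ = 0 := hb _ (min_le_left b 0)

theorem exists_eq_distortT_of_commute_unifCdf {T : (ℝ → ℝ) → ℝ → ℝ} (hG : T unifCdf ∈ mSet)
    (hcomm : ∀ u, IsLeftCtsIncr u → T (utilityT u unifCdf) = utilityT u (T unifCdf)) :
    ∃ d, IsDF d ∧ DFRightCts d ∧ ∀ F ∈ mSet, T F = distortT d F := by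
  have hquantile : ∀ F ∈ mSet, ∀ a, F a = 0 → utilityT (quantile a F) (T unifCdf) = T F := by
    intro F hF a ha
    rw [← hcomm _ (isLeftCtsIncr_quantile hF a), utilityT_quantile_unifCdf hF ha]
  have hG0 : T unifCdf 0 = 0 := apply_zero_of_utilityT_quantile_unifCdf hG fun a ha =>
    hquantile _ unifCdf_mem_mSet a (unifCdf_of_nonpos ha)
  have hd := isDF_distortionOf hG hG0
  have hr := dfRightCts_distortionOf hG
  refine ⟨_, hd, hr, fun F hF => ?_⟩
  obtain ⟨a, ha⟩ := hF.2.2.1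
  rw [distortT_eq_comp hd hr hF, ← utilityT_quantile hF (ha a le_rfl) hG hG0,
    hquantile F hF a (ha a le_rfl)]

/-- A map `T : M → M` commutes with the utility transform `T^u` for every
increasing left-continuous `u : ℝ → ℝ` if and only if `T = T_d` for some
right-continuous distortion function `d`. -/
theorem stmt6 (T : (ℝ → ℝ) → ℝ → ℝ) (hT : ∀ F ∈ mSet, T F ∈ mSet) :
    (∀ u : ℝ → ℝ, IsLeftCtsIncr u → ∀ F ∈ mSet,
        T (utilityT u F) = utilityT u (T F)) ↔
      ∃ d : ℝ → ℝ, IsDF d ∧ DFRightCts d ∧ ∀ F ∈ mSet, T F = distortT d F :=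
  ⟨fun hcomm => exists_eq_distortT_of_commute_unifCdf (hT _ unifCdf_mem_mSet)
      fun u hu => hcomm u hu _ unifCdf_mem_mSet,
    fun ⟨d, hd, hr, hTd⟩ u hu F hF => by
      rw [hTd _ (utilityT_mem_mSet hu.1 hF), hTd F hF, distortT_utilityT_comm hu hd hr hF]⟩
end
end

section
/- Let T : M₀ → M₀ be any mapping on the set of all probability distributions on ℝ. Then T commutes with the probability distortion T_d for every d ∈ F̂_D (i.e., every distortion function with d(0+)=0 and d(1−)=1) if and only if there exists a utility function u ∈ F_U (increasing and continuous) such that T = T^u. -/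
open MeasureTheory Filter Topology Set

noncomputable section

/-!
A distribution is determined by its left quantiles at levels `p ∈ (0, 1)`, and both kinds of
transforms are transparent on quantiles. The `p`-quantile of `T_d F` is a left or a right
quantile of `F`, at the level `q ∈ (0, 1)` where `d` crosses `p`; whether it is left or right
depends only on `d` and `p`. On the other hand `T^u` applies `u` to all left and right
quantiles if `u` is increasing and continuous, so it commutes with every `T_d`.

Conversely, the distortions by `𝟙_{[p, ∞)}` and `𝟙_{(p, ∞)}` send `F` to the point masses at
its left and right `p`-quantile. If `T` commutes with these, it sends point masses to point
masses, say `T δ_x = δ_{u x}`, and it applies `u` to all left and right quantiles. For the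
logistic distribution, whose quantile function is a bijection from `(0, 1)` to `ℝ`, this
expresses `u` through the left quantiles of one distribution, which are increasing and lower
semicontinuous in the level, and also through its right quantiles, which are upper
semicontinuous. Hence `u` is increasing and continuous, and `T F` and `T^u F` have the same
quantiles.
-/

open ProbabilityTheory

/-! ### Quantiles of a distribution -/

lemma mem_Icc_of_mem_m0Set {F : ℝ → ℝ} (hF : F ∈ m0Set) (x : ℝ) : F x ∈ Icc (0 : ℝ) 1 :=
  ⟨hF.1.le_of_tendsto hF.2.2.1 x, hF.1.ge_of_tendsto hF.2.2.2 x⟩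

lemma csInf_le_iff_forall_gt_mem {α : Type*} [ConditionallyCompleteLinearOrder α]
    [DenselyOrdered α] {s : Set α} (hs : IsUpperSet s) (hne : s.Nonempty) (hb : BddBelow s)
    {x : α} : sInf s ≤ x ↔ ∀ y > x, y ∈ s := by
  refine ⟨fun h y hy => ?_, fun h =>
    le_of_forall_gt_imp_ge_of_dense fun y hy => csInf_le hb (h y hy)⟩
  obtain ⟨z, hz, hzy⟩ := exists_lt_of_csInf_lt hne (h.trans_lt hy)
  exact hs hzy.le hz

section Quantiles

variable {F G : ℝ → ℝ} {p x : ℝ}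

lemma exists_lt_of_mem_m0Set (hF : F ∈ m0Set) (hp : p < 1) : ∃ x, p < F x :=
  (hF.2.2.2.eventually (lt_mem_nhds hp)).exists

lemma bddBelow_setOf_le (hF : F ∈ m0Set) (hp : 0 < p) : BddBelow {x | p ≤ F x} := by
  obtain ⟨a, ha⟩ := (hF.2.2.1.eventually (gt_mem_nhds hp)).exists
  exact ⟨a, fun x hx => (hF.1.reflect_lt (ha.trans_le hx)).le⟩

lemma bddBelow_setOf_lt (hF : F ∈ m0Set) (hp : 0 < p) : BddBelow {x | p < F x} :=
  (bddBelow_setOf_le hF hp).mono fun x (hx : p < F x) => hx.le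

lemma leftQ_le_iff_forall_gt (hF : F ∈ m0Set) (hp : p ∈ Ioo (0 : ℝ) 1) :
    leftQ F p ≤ x ↔ ∀ y > x, p ≤ F y :=
  csInf_le_iff_forall_gt_mem (fun _ _ hyz hy => le_trans hy (hF.1 hyz))
    ((exists_lt_of_mem_m0Set hF hp.2).imp fun _ => le_of_lt) (bddBelow_setOf_le hF hp.1)

lemma rightQ_le_iff_forall_gt (hF : F ∈ m0Set) (hp : p ∈ Ioo (0 : ℝ) 1) :
    rightQ F p ≤ x ↔ ∀ y > x, p < F y :=
  csInf_le_iff_forall_gt_mem (fun _ _ hyz hy => lt_of_lt_of_le hy (hF.1 hyz))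
    (exists_lt_of_mem_m0Set hF hp.2) (bddBelow_setOf_lt hF hp.1)

lemma rightQ_lt_iff (hF : F ∈ m0Set) (hp : p ∈ Ioo (0 : ℝ) 1) :
    rightQ F p < x ↔ ∃ y < x, p < F y :=
  (csInf_lt_iff (bddBelow_setOf_lt hF hp.1) (exists_lt_of_mem_m0Set hF hp.2)).trans
    (exists_congr fun _ => and_comm)

lemma leftQ_le_iff (hF : F ∈ m0Set) (hp : p ∈ Ioo (0 : ℝ) 1) : leftQ F p ≤ x ↔ p ≤ F x := by
  rw [leftQ_le_iff_forall_gt hF hp]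
  refine ⟨fun h => ?_, fun h y hy => h.trans (hF.1 (le_of_lt hy))⟩
  exact ge_of_tendsto ((hF.2.1 x).mono Ioi_subset_Ici_self)
    (eventually_nhdsWithin_of_forall fun y hy => h y hy)

lemma lt_leftQ_iff (hF : F ∈ m0Set) (hp : p ∈ Ioo (0 : ℝ) 1) : x < leftQ F p ↔ F x < p :=
  lt_iff_lt_of_le_iff_le (leftQ_le_iff hF hp)

lemma le_of_leftQ_le (hF : F ∈ m0Set) (hG : G ∈ m0Set)
    (h : ∀ p ∈ Ioo (0 : ℝ) 1, leftQ G p ≤ leftQ F p) : F ≤ G := by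
  refine fun x => le_of_forall_lt_imp_le_of_dense fun p hpF => ?_
  obtain hp | hp := le_or_gt p 0
  · exact hp.trans (mem_Icc_of_mem_m0Set hG x).1
  · have hp' : p ∈ Ioo (0 : ℝ) 1 := ⟨hp, hpF.trans_le (mem_Icc_of_mem_m0Set hF x).2⟩
    exact (leftQ_le_iff hG hp').1 ((h p hp').trans ((leftQ_le_iff hF hp').2 hpF.le))

lemma eq_of_leftQ_eq (hF : F ∈ m0Set) (hG : G ∈ m0Set)
    (h : ∀ p ∈ Ioo (0 : ℝ) 1, leftQ F p = leftQ G p) : F = G :=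
  le_antisymm (le_of_leftQ_le hF hG fun p hp => (h p hp).ge)
    (le_of_leftQ_le hG hF fun p hp => (h p hp).le)

lemma monotoneOn_leftQ (hF : F ∈ m0Set) : MonotoneOn (leftQ F) (Ioo 0 1) := fun _ hp _ hq hpq =>
  (leftQ_le_iff hF hp).2 (hpq.trans ((leftQ_le_iff hF hq).1 le_rfl))

lemma lowerSemicontinuousOn_leftQ (hF : F ∈ m0Set) : LowerSemicontinuousOn (leftQ F) (Ioo 0 1) := by
  intro p hp t ht
  filter_upwards [mem_nhdsWithin_of_mem_nhds (Ioi_mem_nhds ((lt_leftQ_iff hF hp).1 ht)),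
    self_mem_nhdsWithin] with q hq hq'
  exact (lt_leftQ_iff hF hq').2 hq

lemma upperSemicontinuousOn_rightQ (hF : F ∈ m0Set) :
    UpperSemicontinuousOn (rightQ F) (Ioo 0 1) := by
  intro p hp t ht
  obtain ⟨y, hyt, hy⟩ := (rightQ_lt_iff hF hp).1 ht
  filter_upwards [mem_nhdsWithin_of_mem_nhds (Iio_mem_nhds hy), self_mem_nhdsWithin] with q hq hq'
  exact (rightQ_lt_iff hF hq').2 ⟨y, hyt, hq⟩

end Quantiles

/-! ### Cumulative distribution functions of measures -/

lemma cdf_mem_m0Set (μ : Measure ℝ) : ⇑(cdf μ) ∈ m0Set :=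
  ⟨monotone_cdf μ, (cdf μ).right_continuous, tendsto_cdf_atBot μ, tendsto_cdf_atTop μ⟩

lemma exists_cdf_eq_of_mem_m0Set {F : ℝ → ℝ} (hF : F ∈ m0Set) :
    ∃ μ : Measure ℝ, IsProbabilityMeasure μ ∧ F = cdf μ := by
  let f : StieltjesFunction ℝ := ⟨F, hF.1, hF.2.1⟩
  exact ⟨f.measure, f.isProbabilityMeasure hF.2.2.1 hF.2.2.2,
    congrArg (⇑) (cdf_measure_stieltjesFunction f hF.2.2.1 hF.2.2.2).symm⟩

lemma le_indicator_one_iff {α : Type*} {s : Set α} {p : ℝ} (hp : p ∈ Ioo (0 : ℝ) 1) {x : α} :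
    p ≤ s.indicator 1 x ↔ x ∈ s := by
  by_cases hx : x ∈ s <;> simp [hx, hp.1, hp.2.le]

lemma cdf_dirac (a x : ℝ) : cdf (Measure.dirac a) x = (Ici a).indicator 1 x := by
  rw [cdf_eq_real, measureReal_def, Measure.dirac_apply' _ measurableSet_Iic]
  by_cases h : a ≤ x <;> simp [h]

lemma leftQ_cdf_dirac (a : ℝ) {p : ℝ} (hp : p ∈ Ioo (0 : ℝ) 1) :
    leftQ (cdf (Measure.dirac a)) p = a :=
  eq_of_forall_ge_iff fun x => by
    rw [leftQ_le_iff (cdf_mem_m0Set _) hp, cdf_dirac, le_indicator_one_iff hp, mem_Ici]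

lemma cdf_dirac_injective : Function.Injective fun a : ℝ => ⇑(cdf (Measure.dirac a)) := by
  have half : (1 / 2 : ℝ) ∈ Ioo (0 : ℝ) 1 := by norm_num
  exact Function.LeftInverse.injective (g := fun F => leftQ F (1 / 2))
    fun a => leftQ_cdf_dirac a half

/-! ### Quantiles of a distorted distribution -/

section Distortion

variable {d F : ℝ → ℝ} {p q : ℝ}

lemma IsDFhat.continuousWithinAt_zero (hd : IsDFhat d) : ContinuousWithinAt d (Ici 0) 0 :=
  continuousWithinAt_Ioi_iff_Ici.1 (by simpa only [ContinuousWithinAt, hd.1.2.1] using hd.2.1)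

lemma IsDFhat.continuousWithinAt_one (hd : IsDFhat d) : ContinuousWithinAt d (Iic 1) 1 :=
  continuousWithinAt_Iio_iff_Iic.1 (by simpa only [ContinuousWithinAt, hd.1.2.2] using hd.2.2)

lemma IsDF.monotone_comp (hd : IsDF d) (hF : F ∈ m0Set) : Monotone (d ∘ F) :=
  fun x y hxy => hd.1 (mem_Icc_of_mem_m0Set hF x) (mem_Icc_of_mem_m0Set hF y) (hF.1 hxy)

lemma distortT_mem_m0Set (hd : IsDFhat d) (hF : F ∈ m0Set) : distortT d F ∈ m0Set := by
  have hm := hd.1.monotone_comp hF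
  have h0 : Tendsto (d ∘ F) atBot (𝓝 0) := hd.1.2.1 ▸ hd.continuousWithinAt_zero.tendsto.comp
    (tendsto_nhdsWithin_iff.2 ⟨hF.2.2.1, .of_forall fun x => (mem_Icc_of_mem_m0Set hF x).1⟩)
  have h1 : Tendsto (d ∘ F) atTop (𝓝 1) := hd.1.2.2 ▸ hd.continuousWithinAt_one.tendsto.comp
    (tendsto_nhdsWithin_iff.2 ⟨hF.2.2.2, .of_forall fun x => (mem_Icc_of_mem_m0Set hF x).2⟩)
  exact ⟨hm.rightLim, hm.stieltjesFunction.right_continuous,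
    tendsto_rightLim_atBot_of_tendsto h0, tendsto_rightLim_atTop_of_tendsto h1⟩

lemma le_distortT_iff (hd : IsDF d) (hF : F ∈ m0Set) {x : ℝ} :
    p ≤ distortT d F x ↔ ∀ y > x, p ≤ d (F y) := by
  have hm := hd.monotone_comp hF
  exact ⟨fun h y hy => h.trans (hm.rightLim_le hy), fun h =>
    ge_of_tendsto (hm.tendsto_rightLim x) (eventually_nhdsWithin_of_forall fun y hy => h y hy)⟩

lemma leftQ_distortT_le_iff (hd : IsDFhat d) (hF : F ∈ m0Set) (hp : p ∈ Ioo (0 : ℝ) 1) {x : ℝ} :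
    leftQ (distortT d F) p ≤ x ↔ ∀ y > x, p ≤ d (F y) := by
  rw [leftQ_le_iff (distortT_mem_m0Set hd hF) hp, le_distortT_iff hd.1 hF]

lemma leftQ_distortT_eq_leftQ (hd : IsDFhat d) (hF : F ∈ m0Set) (hp : p ∈ Ioo (0 : ℝ) 1)
    (hq : q ∈ Ioo (0 : ℝ) 1) (h : ∀ s ∈ Icc (0 : ℝ) 1, p ≤ d s ↔ q ≤ s) :
    leftQ (distortT d F) p = leftQ F q :=
  eq_of_forall_ge_iff fun x => by
    simp only [leftQ_distortT_le_iff hd hF hp, leftQ_le_iff_forall_gt hF hq,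
      h _ (mem_Icc_of_mem_m0Set hF _)]

lemma leftQ_distortT_eq_rightQ (hd : IsDFhat d) (hF : F ∈ m0Set) (hp : p ∈ Ioo (0 : ℝ) 1)
    (hq : q ∈ Ioo (0 : ℝ) 1) (h : ∀ s ∈ Icc (0 : ℝ) 1, p ≤ d s ↔ q < s) :
    leftQ (distortT d F) p = rightQ F q :=
  eq_of_forall_ge_iff fun x => by
    simp only [leftQ_distortT_le_iff hd hF hp, rightQ_le_iff_forall_gt hF hq,
      h _ (mem_Icc_of_mem_m0Set hF _)]

lemma IsDFhat.exists_pos_forall_lt (hd : IsDFhat d) (hp : 0 < p) :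
    ∃ a > 0, ∀ s ∈ Ico 0 a, d s < p := by
  have h := hd.continuousWithinAt_zero.eventually (gt_mem_nhds (hd.1.2.1.trans_lt hp))
  obtain ⟨a, ha, hsub⟩ := mem_nhdsGE_iff_exists_Ico_subset.1 h
  exact ⟨a, ha, fun s hs => hsub hs⟩

lemma IsDFhat.exists_lt_one_forall_lt (hd : IsDFhat d) (hp : p < 1) :
    ∃ b < 1, ∀ s ∈ Ioc b 1, p < d s := by
  have h := hd.continuousWithinAt_one.eventually (lt_mem_nhds (hp.trans_eq hd.1.2.2.symm))
  obtain ⟨b, hb, hsub⟩ := mem_nhdsLE_iff_exists_Ioc_subset.1 h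
  exact ⟨b, hb, fun s hs => hsub hs⟩

lemma IsDFhat.exists_level (hd : IsDFhat d) (hp : p ∈ Ioo (0 : ℝ) 1) :
    ∃ q ∈ Ioo (0 : ℝ) 1, (∀ s ∈ Icc (0 : ℝ) 1, p ≤ d s ↔ q ≤ s) ∨
      ∀ s ∈ Icc (0 : ℝ) 1, p ≤ d s ↔ q < s := by
  set S : Set ℝ := {s ∈ Icc 0 1 | p ≤ d s}
  have hb : BddBelow S := ⟨0, fun s hs => hs.1.1⟩
  have hne : S.Nonempty := ⟨1, right_mem_Icc.2 zero_le_one, hp.2.le.trans_eq hd.1.2.2.symm⟩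
  have hq0 : 0 < sInf S := by
    obtain ⟨a, ha, hlt⟩ := hd.exists_pos_forall_lt hp.1
    exact ha.trans_le (le_csInf hne fun s hs =>
      not_lt.1 fun hsa => hs.2.not_gt (hlt s ⟨hs.1.1, hsa⟩))
  have hq1 : sInf S < 1 := by
    obtain ⟨b, hb1, hlt⟩ := hd.exists_lt_one_forall_lt hp.2
    obtain ⟨s, hbs, hs1⟩ := exists_between (max_lt hb1 zero_lt_one)
    obtain ⟨hbs, hs0⟩ := max_lt_iff.1 hbs
    exact (csInf_le hb ⟨⟨hs0.le, hs1.le⟩, (hlt s ⟨hbs, hs1.le⟩).le⟩).trans_lt hs1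
  have above {s : ℝ} (hs : s ∈ Icc (0 : ℝ) 1) (hqs : sInf S < s) : p ≤ d s := by
    obtain ⟨r, hr, hrs⟩ := exists_lt_of_csInf_lt hne hqs
    exact hr.2.trans (hd.1.1 hr.1 hs hrs.le)
  have below {s : ℝ} (hs : s ∈ Icc (0 : ℝ) 1) (hps : p ≤ d s) : sInf S ≤ s := csInf_le hb ⟨hs, hps⟩
  refine ⟨sInf S, ⟨hq0, hq1⟩, ?_⟩
  by_cases hq : p ≤ d (sInf S)
  · refine .inl fun s hs => ⟨below hs, fun hqs => ?_⟩
    exact hq.trans (hd.1.1 ⟨hq0.le, hq1.le⟩ hs hqs)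
  · refine .inr fun s hs => ⟨fun hps => (below hs hps).lt_of_ne ?_, above hs⟩
    rintro rfl
    exact hq hps

lemma IsDFhat.exists_leftQ_distortT_eq (hd : IsDFhat d) (hp : p ∈ Ioo (0 : ℝ) 1) :
    ∃ q ∈ Ioo (0 : ℝ) 1, (∀ F ∈ m0Set, leftQ (distortT d F) p = leftQ F q) ∨
      ∀ F ∈ m0Set, leftQ (distortT d F) p = rightQ F q := by
  obtain ⟨q, hq, h | h⟩ := hd.exists_level hp
  · exact ⟨q, hq, .inl fun F hF => leftQ_distortT_eq_leftQ hd hF hp hq h⟩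
  · exact ⟨q, hq, .inr fun F hF => leftQ_distortT_eq_rightQ hd hF hp hq h⟩

lemma isDFhat_indicator {s : Set ℝ} (hs : IsUpperSet s) (h0 : sᶜ ∈ 𝓝 0) (h1 : s ∈ 𝓝 1) :
    IsDFhat (s.indicator 1) := by
  refine ⟨⟨fun x _ y _ hxy => ?_, indicator_of_notMem (mem_of_mem_nhds h0) _,
    indicator_of_mem (mem_of_mem_nhds h1) _⟩, ?_, ?_⟩
  · by_cases hx : x ∈ s
    · simp [hx, hs hxy hx]
    · exact (indicator_of_notMem hx 1).trans_le (indicator_nonneg (fun _ _ => zero_le_one) y)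
  · exact tendsto_const_nhds.congr' (mem_nhdsWithin_of_mem_nhds
      (mem_of_superset h0 fun x hx => (indicator_of_notMem hx 1).symm))
  · exact tendsto_const_nhds.congr' (mem_nhdsWithin_of_mem_nhds
      (mem_of_superset h1 fun x hx => (indicator_of_mem hx 1).symm))

lemma isDFhat_indicator_Ici (hp : p ∈ Ioo (0 : ℝ) 1) : IsDFhat ((Ici p).indicator 1) :=
  isDFhat_indicator (isUpperSet_Ici p)
    (by simpa only [compl_Ici] using Iio_mem_nhds hp.1) (Ici_mem_nhds hp.2)

lemma isDFhat_indicator_Ioi (hp : p ∈ Ioo (0 : ℝ) 1) : IsDFhat ((Ioi p).indicator 1) :=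
  isDFhat_indicator (isUpperSet_Ioi p)
    (by simpa only [compl_Ioi] using Iic_mem_nhds hp.1) (Ioi_mem_nhds hp.2)

lemma distortT_indicator_Ici (hF : F ∈ m0Set) (hp : p ∈ Ioo (0 : ℝ) 1) :
    distortT ((Ici p).indicator 1) F = cdf (Measure.dirac (leftQ F p)) := by
  have hd := isDFhat_indicator_Ici hp
  refine eq_of_leftQ_eq (distortT_mem_m0Set hd hF) (cdf_mem_m0Set _) fun r hr => ?_
  rw [leftQ_cdf_dirac _ hr]
  exact leftQ_distortT_eq_leftQ hd hF hr hp fun s _ => le_indicator_one_iff hr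

lemma distortT_indicator_Ioi (hF : F ∈ m0Set) (hp : p ∈ Ioo (0 : ℝ) 1) :
    distortT ((Ioi p).indicator 1) F = cdf (Measure.dirac (rightQ F p)) := by
  have hd := isDFhat_indicator_Ioi hp
  refine eq_of_leftQ_eq (distortT_mem_m0Set hd hF) (cdf_mem_m0Set _) fun r hr => ?_
  rw [leftQ_cdf_dirac _ hr]
  exact leftQ_distortT_eq_rightQ hd hF hr hp fun s _ => le_indicator_one_iff hr

end Distortion

/-! ### Quantiles of a utility transform -/

section Utility

variable {u F : ℝ → ℝ} {p : ℝ}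

lemma utilityT_cdf (hu : Measurable u) (μ : Measure ℝ) [IsProbabilityMeasure μ] :
    utilityT u (cdf μ) = cdf (μ.map u) := by
  have := Measure.isProbabilityMeasure_map (μ := μ) hu.aemeasurable
  funext x
  rw [utilityT, dif_pos ⟨monotone_cdf μ, (cdf μ).right_continuous⟩, cdf_eq_real, measureReal_def]
  exact congrArg (fun ν : Measure ℝ => (ν.map u (Iic x)).toReal) (measure_cdf μ)

lemma utilityT_mem_m0Set (hu : Measurable u) (hF : F ∈ m0Set) : utilityT u F ∈ m0Set := by
  obtain ⟨μ, _, rfl⟩ := exists_cdf_eq_of_mem_m0Set hF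
  exact utilityT_cdf hu μ ▸ cdf_mem_m0Set _

lemma utilityT_cdf_apply (hu : Measurable u) (μ : Measure ℝ) [IsProbabilityMeasure μ] (x : ℝ) :
    utilityT u (cdf μ) x = μ.real (u ⁻¹' Iic x) := by
  have := Measure.isProbabilityMeasure_map (μ := μ) hu.aemeasurable
  rw [utilityT_cdf hu, cdf_eq_real, map_measureReal_apply hu measurableSet_Iic]

lemma le_utilityT (hu : Monotone u) (hF : F ∈ m0Set) {y z : ℝ} (h : u z ≤ y) :
    F z ≤ utilityT u F y := by
  obtain ⟨μ, _, rfl⟩ := exists_cdf_eq_of_mem_m0Set hF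
  rw [utilityT_cdf_apply hu.measurable, cdf_eq_real]
  exact measureReal_mono fun w hw => (hu hw).trans h

lemma utilityT_le (hu : Monotone u) (hF : F ∈ m0Set) {y z : ℝ} (h : y < u z) :
    utilityT u F y ≤ F z := by
  obtain ⟨μ, _, rfl⟩ := exists_cdf_eq_of_mem_m0Set hF
  rw [utilityT_cdf_apply hu.measurable, cdf_eq_real]
  exact measureReal_mono fun w hw => (hu.reflect_lt (lt_of_le_of_lt hw h)).le

lemma IsLeftCtsIncr.exists_lt_of_lt (hu : IsLeftCtsIncr u) {t x : ℝ} (h : t < u x) :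
    ∃ z < x, t < u z :=
  ((((hu.2 x).mono Iio_subset_Iic_self).eventually (lt_mem_nhds h)).and
    self_mem_nhdsWithin).exists.imp fun _ => And.symm

lemma IsUF.isLeftCtsIncr (hu : IsUF u) : IsLeftCtsIncr u :=
  ⟨hu.1, fun _ => hu.2.continuousWithinAt⟩

lemma IsUF.exists_gt_of_lt (hu : IsUF u) {t x : ℝ} (h : u x < t) : ∃ z > x, u z < t :=
  (((hu.2.continuousWithinAt (s := Ioi x)).eventually (gt_mem_nhds h)).and
    self_mem_nhdsWithin).exists.imp fun _ => And.symm

lemma leftQ_utilityT (hu : IsLeftCtsIncr u) (hF : F ∈ m0Set) (hp : p ∈ Ioo (0 : ℝ) 1) :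
    leftQ (utilityT u F) p = u (leftQ F p) := by
  refine eq_of_forall_ge_iff fun t => ?_
  rw [leftQ_le_iff (utilityT_mem_m0Set hu.1.measurable hF) hp]
  refine ⟨fun h => not_lt.1 fun htu => ?_, fun h =>
    ((leftQ_le_iff hF hp).1 le_rfl).trans (le_utilityT hu.1 hF h)⟩
  obtain ⟨z, hz, htz⟩ := hu.exists_lt_of_lt htu
  exact ((utilityT_le hu.1 hF htz).trans_lt ((lt_leftQ_iff hF hp).1 hz)).not_ge h

lemma rightQ_utilityT (hu : IsUF u) (hF : F ∈ m0Set) (hp : p ∈ Ioo (0 : ℝ) 1) :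
    rightQ (utilityT u F) p = u (rightQ F p) := by
  refine eq_of_forall_gt_iff fun t => ?_
  rw [rightQ_lt_iff (utilityT_mem_m0Set hu.1.measurable hF) hp]
  constructor
  · rintro ⟨y, hyt, hy⟩
    refine lt_of_le_of_lt (not_lt.1 fun hyu => ?_) hyt
    obtain ⟨z, hz, hyz⟩ := hu.isLeftCtsIncr.exists_lt_of_lt hyu
    exact hz.not_ge (csInf_le (bddBelow_setOf_lt hF hp.1) (hy.trans_le (utilityT_le hu.1 hF hyz)))
  · intro h
    obtain ⟨z, hz, hzt⟩ := hu.exists_gt_of_lt h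
    exact ⟨u z, hzt, ((rightQ_le_iff_forall_gt hF hp).1 le_rfl z hz).trans_le
      (le_utilityT hu.1 hF le_rfl)⟩

lemma utilityT_distortT {d : ℝ → ℝ} (hu : IsUF u) (hd : IsDFhat d) (hF : F ∈ m0Set) :
    utilityT u (distortT d F) = distortT d (utilityT u F) := by
  have hdF := distortT_mem_m0Set hd hF
  have huF := utilityT_mem_m0Set hu.1.measurable hF
  refine eq_of_leftQ_eq (utilityT_mem_m0Set hu.1.measurable hdF) (distortT_mem_m0Set hd huF)
    fun p hp => ?_
  rw [leftQ_utilityT hu.isLeftCtsIncr hdF hp]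
  obtain ⟨q, hq, h | h⟩ := hd.exists_leftQ_distortT_eq hp
  · rw [h F hF, h _ huF, leftQ_utilityT hu.isLeftCtsIncr hF hq]
  · rw [h F hF, h _ huF, rightQ_utilityT hu hF hq]

end Utility

/-! ### Maps commuting with distortions -/

/-- The map `T` commutes with the probability distortion `T_d` on `M₀`. As a predicate in `d`, it
allows commutation to be assumed for step functions `d` only. -/
def CommutesWithDistortion (T : (ℝ → ℝ) → ℝ → ℝ) (d : ℝ → ℝ) : Prop :=
  ∀ F ∈ m0Set, T (distortT d F) = distortT d (T F)

section Commuting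

variable {T : (ℝ → ℝ) → ℝ → ℝ} {u F : ℝ → ℝ} {p : ℝ}

lemma CommutesWithDistortion.exists_map_cdf_dirac
    (hc : CommutesWithDistortion T ((Ici p).indicator 1)) (hT : ∀ F ∈ m0Set, T F ∈ m0Set)
    (hp : p ∈ Ioo (0 : ℝ) 1) :
    ∃ u : ℝ → ℝ, ∀ x, T (cdf (Measure.dirac x)) = cdf (Measure.dirac (u x)) := by
  refine ⟨fun x => leftQ (T (cdf (Measure.dirac x))) p, fun x => ?_⟩
  have hx := cdf_mem_m0Set (Measure.dirac x)
  calc T (cdf (Measure.dirac x))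
      = T (distortT ((Ici p).indicator 1) (cdf (Measure.dirac x))) := by
        rw [distortT_indicator_Ici hx hp, leftQ_cdf_dirac x hp]
    _ = distortT ((Ici p).indicator 1) (T (cdf (Measure.dirac x))) := hc _ hx
    _ = cdf (Measure.dirac (leftQ (T (cdf (Measure.dirac x))) p)) :=
        distortT_indicator_Ici (hT _ hx) hp

lemma CommutesWithDistortion.leftQ_map
    (hc : CommutesWithDistortion T ((Ici p).indicator 1)) (hT : ∀ F ∈ m0Set, T F ∈ m0Set)
    (hu : ∀ x, T (cdf (Measure.dirac x)) = cdf (Measure.dirac (u x)))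
    (hp : p ∈ Ioo (0 : ℝ) 1) (hF : F ∈ m0Set) : leftQ (T F) p = u (leftQ F p) := by
  apply cdf_dirac_injective
  beta_reduce
  rw [← hu, ← distortT_indicator_Ici hF hp, hc F hF, distortT_indicator_Ici (hT F hF) hp]

lemma CommutesWithDistortion.rightQ_map
    (hc : CommutesWithDistortion T ((Ioi p).indicator 1)) (hT : ∀ F ∈ m0Set, T F ∈ m0Set)
    (hu : ∀ x, T (cdf (Measure.dirac x)) = cdf (Measure.dirac (u x)))
    (hp : p ∈ Ioo (0 : ℝ) 1) (hF : F ∈ m0Set) : rightQ (T F) p = u (rightQ F p) := by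
  apply cdf_dirac_injective
  beta_reduce
  rw [← hu, ← distortT_indicator_Ioi hF hp, hc F hF, distortT_indicator_Ioi (hT F hF) hp]

lemma sigmoid_mem_m0Set : Real.sigmoid ∈ m0Set :=
  ⟨Real.sigmoid_monotone, fun _ => continuous_sigmoid.continuousWithinAt,
    Real.tendsto_sigmoid_atBot, Real.tendsto_sigmoid_atTop⟩

lemma sigmoid_mem_Ioo (x : ℝ) : Real.sigmoid x ∈ Ioo (0 : ℝ) 1 :=
  ⟨Real.sigmoid_pos x, Real.sigmoid_lt_one x⟩

lemma leftQ_sigmoid (x : ℝ) : leftQ Real.sigmoid (Real.sigmoid x) = x := by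
  simp only [leftQ, Real.sigmoid_le_iff]
  exact csInf_Ici

lemma rightQ_sigmoid (x : ℝ) : rightQ Real.sigmoid (Real.sigmoid x) = x := by
  simp only [rightQ, Real.sigmoid_lt_iff]
  exact csInf_Ioi

lemma isUF_of_eq_leftQ_of_eq_rightQ {φ : ℝ → ℝ} (hF : F ∈ m0Set) (hφ : Monotone φ)
    (hφc : Continuous φ) (hφ01 : ∀ x, φ x ∈ Ioo (0 : ℝ) 1) (hL : ∀ x, u x = leftQ F (φ x))
    (hR : ∀ x, u x = rightQ F (φ x)) : IsUF u := by
  refine ⟨fun x y hxy => ?_, continuous_iff_lower_upperSemicontinuous.2 ⟨?_, ?_⟩⟩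
  · rw [hL, hL]
    exact monotoneOn_leftQ hF (hφ01 x) (hφ01 y) (hφ hxy)
  · rw [funext hL, ← lowerSemicontinuousOn_univ_iff]
    exact (lowerSemicontinuousOn_leftQ hF).comp hφc.continuousOn fun x _ => hφ01 x
  · rw [funext hR, ← upperSemicontinuousOn_univ_iff]
    exact (upperSemicontinuousOn_rightQ hF).comp hφc.continuousOn fun x _ => hφ01 x

lemma exists_isUF_eq_utilityT (hT : ∀ F ∈ m0Set, T F ∈ m0Set)
    (hIci : ∀ p ∈ Ioo (0 : ℝ) 1, CommutesWithDistortion T ((Ici p).indicator 1))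
    (hIoi : ∀ p ∈ Ioo (0 : ℝ) 1, CommutesWithDistortion T ((Ioi p).indicator 1)) :
    ∃ u : ℝ → ℝ, IsUF u ∧ ∀ F ∈ m0Set, T F = utilityT u F := by
  obtain ⟨u, hu⟩ : ∃ u : ℝ → ℝ, ∀ x, T (cdf (Measure.dirac x)) = cdf (Measure.dirac (u x)) :=
    (hIci _ (sigmoid_mem_Ioo 0)).exists_map_cdf_dirac hT (sigmoid_mem_Ioo 0)
  have hL {F} (hF : F ∈ m0Set) {p} (hp : p ∈ Ioo (0 : ℝ) 1) : leftQ (T F) p = u (leftQ F p) :=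
    (hIci p hp).leftQ_map hT hu hp hF
  have hR {F} (hF : F ∈ m0Set) {p} (hp : p ∈ Ioo (0 : ℝ) 1) : rightQ (T F) p = u (rightQ F p) :=
    (hIoi p hp).rightQ_map hT hu hp hF
  have hUF : IsUF u :=
    isUF_of_eq_leftQ_of_eq_rightQ (hT _ sigmoid_mem_m0Set) Real.sigmoid_monotone continuous_sigmoid
      sigmoid_mem_Ioo
      (fun x => by rw [hL sigmoid_mem_m0Set (sigmoid_mem_Ioo x), leftQ_sigmoid])
      (fun x => by rw [hR sigmoid_mem_m0Set (sigmoid_mem_Ioo x), rightQ_sigmoid])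
  refine ⟨u, hUF, fun F hF => ?_⟩
  refine eq_of_leftQ_eq (hT F hF) (utilityT_mem_m0Set hUF.1.measurable hF) fun p hp => ?_
  rw [hL hF hp, leftQ_utilityT hUF.isLeftCtsIncr hF hp]

end Commuting

/-- A map `T : M₀ → M₀` commutes with the probability distortion `T_d` for
every `d ∈ F̂_D` (distortion function with `d(0+) = 0`, `d(1-) = 1`) if and only
if `T = T^u` for some utility function `u` (increasing and continuous). -/
theorem stmt9 (T : (ℝ → ℝ) → ℝ → ℝ) (hT : ∀ F ∈ m0Set, T F ∈ m0Set) :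
    (∀ d : ℝ → ℝ, IsDFhat d → ∀ F ∈ m0Set, T (distortT d F) = distortT d (T F)) ↔
      ∃ u : ℝ → ℝ, IsUF u ∧ ∀ F ∈ m0Set, T F = utilityT u F := by
  constructor
  · intro h
    exact exists_isUF_eq_utilityT hT (fun p hp => h _ (isDFhat_indicator_Ici hp))
      (fun p hp => h _ (isDFhat_indicator_Ioi hp))
  · rintro ⟨u, hu, hTu⟩ d hd F hF
    rw [hTu _ (distortT_mem_m0Set hd hF), hTu F hF, utilityT_distortT hu hd hF]
end
end
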